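/- There is exactly one connected parity-reversing pairing on [6] with exactly 3 crossings (b_{3,3} = 1), and for every n ≥ 4 there are exactly two connected parity-reversing pairings on [2n] with exactly n crossings (b_{n,n} = 2). -/

import Mathlib

open scoped Classical

/-- Asymmetric crossing of two chords: `B = {a,b}` with `a < b` starts strictly
before `C = {c,d}` and they interleave: `a < c < b < d`. -/
def CrossAsym (B C : Finset ℕ) : Prop :=
  ∃ a b c d : ℕ, a < c ∧ c < b ∧ b < d ∧ B = {a, b} ∧ C = {c, d}

/-- Two blocks cross: `a < c < b < d` or `c < a < d < b`. -/
def Crosses (B C : Finset ℕ) : Prop := CrossAsym B C ∨ CrossAsym C B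

/-- A pairing on `[2n] = {1, …, 2n}`: a partition of `{1, …, 2n}` into blocks of size 2. -/
def IsPairing (n : ℕ) (π : Finset (Finset ℕ)) : Prop :=
  (∀ B ∈ π, B.card = 2 ∧ B ⊆ Finset.Icc 1 (2 * n)) ∧
  (∀ x ∈ Finset.Icc 1 (2 * n), ∃! B, B ∈ π ∧ x ∈ B)

/-- Number of crossings of a pairing: the number of unordered pairs of blocks that cross
(each crossing unordered pair `{B, C}` satisfies the asymmetric condition exactly once). -/
noncomputable def crNum (π : Finset (Finset ℕ)) : ℕ :=
  Set.ncard {p : Finset ℕ × Finset ℕ | p.1 ∈ π ∧ p.2 ∈ π ∧ CrossAsym p.1 p.2}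

/-- A pairing is parity-reversing if each block consists of one odd and one even number. -/
def ParityReversing (π : Finset (Finset ℕ)) : Prop :=
  ∀ B ∈ π, ∃ a b : ℕ, B = {a, b} ∧ Odd a ∧ Even b

/-- A pairing is connected if its blocks cannot be split into two nonempty families
with no crossing between the families. -/
def ConnectedPairing (π : Finset (Finset ℕ)) : Prop :=
  ¬ ∃ S T : Finset (Finset ℕ), S ∪ T = π ∧ Disjoint S T ∧ S.Nonempty ∧ T.Nonempty ∧
      ∀ B ∈ S, ∀ C ∈ T, ¬ Crosses B C

/-- `tCount n k`: the number of pairings on `[2n]` with exactly `k` crossings. -/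
noncomputable def tCount (n k : ℕ) : ℕ :=
  Set.ncard {π : Finset (Finset ℕ) | IsPairing n π ∧ crNum π = k}

/-- `rCount n k`: the number of parity-reversing pairings on `[2n]` with exactly `k` crossings. -/
noncomputable def rCount (n k : ℕ) : ℕ :=
  Set.ncard {π : Finset (Finset ℕ) | IsPairing n π ∧ ParityReversing π ∧ crNum π = k}

/-- `bCount n k`: the number of connected parity-reversing pairings on `[2n]`
with exactly `k` crossings. -/
noncomputable def bCount (n k : ℕ) : ℕ :=
  Set.ncard {π : Finset (Finset ℕ) |
    IsPairing n π ∧ ParityReversing π ∧ ConnectedPairing π ∧ crNum π = k}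

/-- `bTot n`: the number of connected parity-reversing pairings on `[2n]` (equals 1 for `n = 0`). -/
noncomputable def bTot (n : ℕ) : ℕ :=
  Set.ncard {π : Finset (Finset ℕ) |
    IsPairing n π ∧ ParityReversing π ∧ ConnectedPairing π}

/-- The Touchard alternating sum `∑_{k=-n}^n (-1)^k q^{k(k-1)/2} C(2n, n+k)`. -/
noncomputable def touchardSum (n : ℕ) (q : ℂ) : ℂ :=
  ∑ k ∈ Finset.Icc (-(n : ℤ)) (n : ℤ),
    (-1 : ℂ) ^ k * q ^ ((k * (k - 1)) / 2).toNat * ((2 * n).choose ((n : ℤ) + k).toNat : ℂ)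

/-- `T_n(q) = ∑_k t_{n,k} q^k` as a complex polynomial function
(all crossing numbers of pairings on `[2n]` satisfy `k ≤ n*n`). -/
noncomputable def Tpoly (n : ℕ) (q : ℂ) : ℂ :=
  ∑ k ∈ Finset.range (n * n + 1), (tCount n k : ℂ) * q ^ k

/-- `T_n(q) = ∑_k t_{n,k} q^k` as a real polynomial function. -/
noncomputable def TpolyR (n : ℕ) (q : ℝ) : ℝ :=
  ∑ k ∈ Finset.range (n * n + 1), (tCount n k : ℝ) * q ^ k

/-- `R_n(q) = ∑_k r_{n,k} q^k` as a real polynomial function. -/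
noncomputable def RpolyR (n : ℕ) (q : ℝ) : ℝ :=
  ∑ k ∈ Finset.range (n * n + 1), (rCount n k : ℝ) * q ^ k

/-- Non-crossing partitions of `{1, …, 2n}` all of whose blocks have even size. -/
noncomputable def NCEvenPartitions (n : ℕ) : Finset (Finset (Finset ℕ)) :=
  ((Finset.Icc 1 (2 * n)).powerset.powerset).filter (fun π =>
    (∀ B ∈ π, B.Nonempty ∧ Even B.card) ∧
    (∀ x ∈ Finset.Icc 1 (2 * n), ∃! B, B ∈ π ∧ x ∈ B) ∧
    ¬ ∃ a b c d : ℕ, a < b ∧ b < c ∧ c < d ∧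
        ∃ B ∈ π, ∃ C ∈ π, B ≠ C ∧ a ∈ B ∧ c ∈ B ∧ b ∈ C ∧ d ∈ C)

noncomputable def wC (B C : Finset ℕ) : ℕ := if Crosses B C then 1 else 0
noncomputable def sC (B C : Finset ℕ) : ℕ := if CrossAsym B C then 1 else 0

lemma pair_eq_lt {a b c d : ℕ} (h1 : a < b) (h2 : c < d)
    (h : ({a, b} : Finset ℕ) = {c, d}) : a = c ∧ b = d := by
  have ha : a ∈ ({c, d} : Finset ℕ) := by rw [← h]; simp
  have hb : b ∈ ({c, d} : Finset ℕ) := by rw [← h]; simp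
  simp at ha hb
  omega

lemma crossAsym_iff {a b c d : ℕ} (h1 : a < b) (h2 : c < d) :
    CrossAsym {a, b} {c, d} ↔ a < c ∧ c < b ∧ b < d := by
  constructor
  · rintro ⟨a', b', c', d', x1, x2, x3, e1, e2⟩
    obtain ⟨rfl, rfl⟩ := pair_eq_lt h1 (by omega) e1
    obtain ⟨rfl, rfl⟩ := pair_eq_lt h2 (by omega) e2
    exact ⟨x1, x2, x3⟩
  · rintro ⟨x1, x2, x3⟩
    exact ⟨a, b, c, d, x1, x2, x3, rfl, rfl⟩

lemma crosses_iff {a b c d : ℕ} (h1 : a < b) (h2 : c < d) :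
    Crosses {a, b} {c, d} ↔ (a < c ∧ c < b ∧ b < d) ∨ (c < a ∧ a < d ∧ d < b) := by
  unfold Crosses
  rw [crossAsym_iff h1 h2, crossAsym_iff h2 h1]

lemma crosses_symm {B C : Finset ℕ} : Crosses B C ↔ Crosses C B := by
  unfold Crosses; exact or_comm

lemma wC_symm (B C : Finset ℕ) : wC B C = wC C B := by
  unfold wC; simp only [crosses_symm (B := B)]

lemma wC_eq (B C : Finset ℕ) : wC B C = sC B C + sC C B := by
  unfold wC sC Crosses
  by_cases h1 : CrossAsym B C
  · have h2 : ¬ CrossAsym C B := by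
      obtain ⟨a, b, c, d, x1, x2, x3, rfl, rfl⟩ := h1
      rw [crossAsym_iff (by omega) (by omega)]
      omega
    simp [h1, h2]
  · simp [h1]

lemma exists_pair {B : Finset ℕ} (h : B.card = 2) : ∃ a b, a < b ∧ B = {a, b} := by
  obtain ⟨x, y, hxy, rfl⟩ := Finset.card_eq_two.1 h
  rcases lt_or_gt_of_ne hxy with h | h
  · exact ⟨x, y, h, rfl⟩
  · exact ⟨y, x, h, Finset.pair_comm _ _⟩

lemma card_pair_inter {c d : ℕ} (h : c ≠ d) (I : Finset ℕ) :
    (({c, d} : Finset ℕ) ∩ I).card = (if c ∈ I then 1 else 0) + (if d ∈ I then 1 else 0) := by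
  rw [← Finset.filter_mem_eq_inter, Finset.card_filter, Finset.sum_pair h]

lemma blk_eq {n : ℕ} {π : Finset (Finset ℕ)} (hp : IsPairing n π) {B C : Finset ℕ}
    (hB : B ∈ π) (hC : C ∈ π) {x : ℕ} (h1 : x ∈ B) (h2 : x ∈ C) : B = C :=
  (hp.2 x ((hp.1 B hB).2 h1)).unique ⟨hB, h1⟩ ⟨hC, h2⟩

lemma sum_inter {n : ℕ} {π : Finset (Finset ℕ)} (hp : IsPairing n π) (I : Finset ℕ)
    (hI : I ⊆ Finset.Icc 1 (2 * n)) : ∑ C ∈ π, (C ∩ I).card = I.card := by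
  rw [← Finset.card_biUnion]
  · congr 1
    ext x
    simp only [Finset.mem_biUnion, Finset.mem_inter]
    constructor
    · rintro ⟨C, _, _, h⟩; exact h
    · intro hx
      obtain ⟨C, ⟨h1, h2⟩, _⟩ := hp.2 x (hI hx)
      exact ⟨C, h1, h2, hx⟩
  · intro B hB C hC hne
    change Disjoint (B ∩ I) (C ∩ I)
    rw [Finset.disjoint_left]
    intro x h1 h2
    exact hne (blk_eq hp hB hC (Finset.mem_inter.1 h1).1 (Finset.mem_inter.1 h2).1)

lemma card_pairing {n : ℕ} {π : Finset (Finset ℕ)} (hp : IsPairing n π) : π.card = n := by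
  have h := sum_inter hp (Finset.Icc 1 (2 * n)) subset_rfl
  have h2 : ∑ C ∈ π, (C ∩ Finset.Icc 1 (2 * n)).card = ∑ C ∈ π, 2 := by
    apply Finset.sum_congr rfl
    intro C hC
    rw [Finset.inter_eq_left.2 (hp.1 C hC).2, (hp.1 C hC).1]
  rw [h2] at h
  simp at h
  omega

lemma crNum_eq (π : Finset (Finset ℕ)) : crNum π = ∑ B ∈ π, ∑ C ∈ π, sC B C := by
  unfold crNum
  have : {p : Finset ℕ × Finset ℕ | p.1 ∈ π ∧ p.2 ∈ π ∧ CrossAsym p.1 p.2}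
      = ((π ×ˢ π).filter (fun p => CrossAsym p.1 p.2) : Finset _) := by
    ext p; simp [and_assoc]
  rw [this, Set.ncard_coe_finset, Finset.card_filter, Finset.sum_product]
  rfl

lemma sum_wC (M : Finset (Finset ℕ)) :
    ∑ B ∈ M, ∑ C ∈ M, wC B C = 2 * ∑ B ∈ M, ∑ C ∈ M, sC B C := by
  simp only [wC_eq, Finset.sum_add_distrib]
  rw [Finset.sum_comm (f := fun x y => sC y x)]
  ring

def outP (n a b : ℕ) : Finset ℕ := Finset.Icc 1 (2 * n) \ Finset.Icc a b

lemma trich {n : ℕ} {π : Finset (Finset ℕ)} (hp : IsPairing n π) {a b : ℕ} (hab : a < b)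
    (hB : {a, b} ∈ π) {C : Finset ℕ} (hC : C ∈ π) :
    (C = {a, b} ∧ (C ∩ Finset.Ioo a b).card = 0 ∧ (C ∩ outP n a b).card = 0 ∧ wC {a, b} C = 0) ∨
    (C ≠ {a, b} ∧ (C ∩ Finset.Ioo a b).card = 0 ∧ (C ∩ outP n a b).card = 2 ∧ wC {a, b} C = 0) ∨
    (C ≠ {a, b} ∧ (C ∩ Finset.Ioo a b).card = 1 ∧ (C ∩ outP n a b).card = 1 ∧ wC {a, b} C = 1) ∨
    (C ≠ {a, b} ∧ (C ∩ Finset.Ioo a b).card = 2 ∧ (C ∩ outP n a b).card = 0 ∧ wC {a, b} C = 0) := by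
  have hCI := (hp.1 C hC).2
  obtain ⟨c, d, hcd, rfl⟩ := exists_pair (hp.1 C hC).1
  have hc : c ∈ Finset.Icc 1 (2 * n) := hCI (by simp)
  have hd : d ∈ Finset.Icc 1 (2 * n) := hCI (by simp)
  rw [Finset.mem_Icc] at hc hd
  by_cases h : ({c, d} : Finset ℕ) = {a, b}
  · left
    obtain ⟨rfl, rfl⟩ := pair_eq_lt hcd hab h
    rw [card_pair_inter hcd.ne, card_pair_inter hcd.ne]
    unfold wC
    rw [crosses_iff hcd hcd]
    simp [outP, hab.le]
  · right
    have e : ∀ x, x ∈ ({c, d} : Finset ℕ) → x ∈ ({a, b} : Finset ℕ) → False :=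
      fun x h1 h2 => h (blk_eq hp hC hB h1 h2)
    have e1 := e c (by simp)
    have e2 := e d (by simp)
    simp only [Finset.mem_insert, Finset.mem_singleton] at e1 e2
    have e3 : c ≠ a ∧ c ≠ b := ⟨fun h => e1 (Or.inl h), fun h => e1 (Or.inr h)⟩
    have e4 : d ≠ a ∧ d ≠ b := ⟨fun h => e2 (Or.inl h), fun h => e2 (Or.inr h)⟩
    rw [card_pair_inter hcd.ne, card_pair_inter hcd.ne]
    unfold wC
    rw [crosses_iff hab hcd]
    simp only [outP, Finset.mem_sdiff, Finset.mem_Icc, Finset.mem_Ioo, h, ne_eq, not_false_eq_true,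
      true_and]
    split_ifs <;> first | omega | simp

lemma boundary_pos {π : Finset (Finset ℕ)} (hc : ConnectedPairing π) {M : Finset (Finset ℕ)}
    (hM : M ⊆ π) (h1 : M.Nonempty) (h2 : M ≠ π) : 1 ≤ ∑ C ∈ M, ∑ D ∈ π \ M, wC C D := by
  by_contra h
  apply hc
  refine ⟨M, π \ M, Finset.union_sdiff_of_subset hM, Finset.disjoint_sdiff, h1, ?_, ?_⟩
  · rw [Finset.sdiff_nonempty]
    exact fun h => h2 (Finset.Subset.antisymm hM h)
  · intro B hB C hC hx
    have h0 : ∑ C ∈ M, ∑ D ∈ π \ M, wC C D = 0 := by omega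
    rw [Finset.sum_eq_zero_iff] at h0
    have := h0 B hB
    rw [Finset.sum_eq_zero_iff] at this
    have := this C hC
    simp [wC, hx] at this

lemma sum_split (π : Finset (Finset ℕ)) {M : Finset (Finset ℕ)} (hM : M ⊆ π) :
    ∑ C ∈ M, ∑ D ∈ π, wC C D = ∑ C ∈ M, ∑ D ∈ M, wC C D + ∑ C ∈ M, ∑ D ∈ π \ M, wC C D := by
  rw [← Finset.sum_add_distrib]
  apply Finset.sum_congr rfl
  intro C _
  rw [add_comm, Finset.sum_sdiff hM]

lemma boundary_two {π : Finset (Finset ℕ)} (hc : ConnectedPairing π)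
    (hdeg : ∀ B ∈ π, ∑ C ∈ π, wC B C = 2) {M : Finset (Finset ℕ)}
    (hM : M ⊆ π) (h1 : M.Nonempty) (h2 : M ≠ π) : 2 ≤ ∑ C ∈ M, ∑ D ∈ π \ M, wC C D := by
  have h3 := boundary_pos hc hM h1 h2
  have h4 := sum_split π hM
  rw [Finset.sum_congr rfl (fun C hC => hdeg C (hM hC)), sum_wC] at h4
  simp at h4
  omega

lemma deg_even {n : ℕ} {π : Finset (Finset ℕ)} (hp : IsPairing n π) (hr : ParityReversing π)
    {B : Finset ℕ} (hB : B ∈ π) : Even (∑ C ∈ π, wC B C) := by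
  obtain ⟨a, b, hab, rfl⟩ := exists_pair (hp.1 B hB).1
  have hsub := (hp.1 _ hB).2
  have ha : a ∈ Finset.Icc 1 (2 * n) := hsub (by simp)
  have hb : b ∈ Finset.Icc 1 (2 * n) := hsub (by simp)
  rw [Finset.mem_Icc] at ha hb
  have h1 := sum_inter hp (Finset.Ioo a b) (by
    intro x; simp only [Finset.mem_Ioo, Finset.mem_Icc]; omega)
  have h2 : ∑ C ∈ π, (C ∩ Finset.Ioo a b).card ≡ ∑ C ∈ π, wC {a, b} C [MOD 2] := by
    rw [Nat.ModEq, Finset.sum_nat_mod, Finset.sum_nat_mod (f := fun C => wC {a, b} C)]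
    congr 1
    apply Finset.sum_congr rfl
    intro C hC
    rcases trich hp hab hB hC with h | h | h | h <;> rw [h.2.1, h.2.2.2]
  rw [h1] at h2
  obtain ⟨x, y, e, ⟨x', hx⟩, ⟨y', hy⟩⟩ := hr _ hB
  simp only [Nat.card_Ioo, Nat.ModEq] at h2
  have : (a = x ∧ b = y) ∨ (a = y ∧ b = x) := by
    have h1 : a ∈ ({x, y} : Finset ℕ) := by rw [← e]; simp
    have h2 : b ∈ ({x, y} : Finset ℕ) := by rw [← e]; simp
    simp at h1 h2
    omega
  rw [Nat.even_iff]
  omega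

lemma deg_two {n : ℕ} {π : Finset (Finset ℕ)} (hn : 2 ≤ n) (hp : IsPairing n π)
    (hr : ParityReversing π) (hc : ConnectedPairing π) (hk : crNum π = n) :
    ∀ B ∈ π, ∑ C ∈ π, wC B C = 2 := by
  have hge : ∀ B ∈ π, 2 ≤ ∑ C ∈ π, wC B C := by
    intro B hB
    have h1 := deg_even hp hr hB
    have h2 := boundary_pos hc (M := {B}) (by simpa using hB) (by simp) (by
      intro h
      have := card_pairing hp
      rw [← h] at this
      simp at this; omega)
    rw [Finset.sum_singleton] at h2
    have h3 : ∑ D ∈ π \ {B}, wC B D ≤ ∑ D ∈ π, wC B D :=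
      Finset.sum_le_sum_of_subset Finset.sdiff_subset
    rw [Nat.even_iff] at h1
    omega
  have hs : ∑ B ∈ π, 2 = ∑ B ∈ π, ∑ C ∈ π, wC B C := by
    rw [sum_wC, ← crNum_eq, hk]
    simp [card_pairing hp, mul_comm]
  intro B hB
  exact ((Finset.sum_eq_sum_iff_of_le hge).1 hs B hB).symm

lemma no_tri {n : ℕ} {π : Finset (Finset ℕ)} (hn : 4 ≤ n) (hp : IsPairing n π)
    (hc : ConnectedPairing π) (hdeg : ∀ B ∈ π, ∑ C ∈ π, wC B C = 2)
    {A B C : Finset ℕ} (hA : A ∈ π) (hB : B ∈ π) (hC : C ∈ π) (h1 : Crosses A B)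
    (h2 : Crosses A C) (h3 : Crosses B C) : False := by
  have irr : ∀ D ∈ π, ¬ Crosses D D := by
    intro D hD h
    obtain ⟨a, b, hab, rfl⟩ := exists_pair (hp.1 D hD).1
    rw [crosses_iff hab hab] at h; omega
  have n1 : A ≠ B := by rintro rfl; exact irr _ hA h1
  have n2 : A ≠ C := by rintro rfl; exact irr _ hA h2
  have n3 : B ≠ C := by rintro rfl; exact irr _ hB h3
  have hM : ({A, B, C} : Finset (Finset ℕ)) ⊆ π := by
    intro x hx; simp at hx; rcases hx with rfl | rfl | rfl <;> assumption
  have h4 := boundary_pos hc hM (by simp) (by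
    intro h
    have := card_pairing hp
    rw [← h, Finset.card_eq_three.2 ⟨A, B, C, n1, n2, n3, rfl⟩] at this
    omega)
  have h5 := sum_split π hM
  rw [Finset.sum_congr rfl (fun C hC => hdeg C (hM hC))] at h5
  have e : ∑ X ∈ ({A, B, C} : Finset (Finset ℕ)), ∑ Y ∈ ({A, B, C} : Finset (Finset ℕ)), wC X Y
      = 6 := by
    have m1 : A ∉ ({B, C} : Finset (Finset ℕ)) := by simp [n1, n2]
    simp only [Finset.sum_insert m1, Finset.sum_pair n3]
    simp [wC, h1, h2, h3, crosses_symm.1 h1, crosses_symm.1 h2, crosses_symm.1 h3, irr _ hA,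
      irr _ hB, irr _ hC]
  rw [e, Finset.sum_const, Finset.card_eq_three.2 ⟨A, B, C, n1, n2, n3, rfl⟩, smul_eq_mul] at h5
  omega

lemma sided {n : ℕ} {π : Finset (Finset ℕ)} (hp : IsPairing n π)
    (hc : ConnectedPairing π) (hdeg : ∀ B ∈ π, ∑ C ∈ π, wC B C = 2) {a b : ℕ} (hab : a < b)
    (hB : {a, b} ∈ π) : b = a + 3 ∨ b + 3 = a + 2 * n := by
  have hsub := (hp.1 _ hB).2
  have ha : a ∈ Finset.Icc 1 (2 * n) := hsub (by simp)
  have hb : b ∈ Finset.Icc 1 (2 * n) := hsub (by simp)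
  rw [Finset.mem_Icc] at ha hb
  have hI := sum_inter hp (Finset.Ioo a b) (by
    intro x; simp only [Finset.mem_Ioo, Finset.mem_Icc]; omega)
  have hO := sum_inter hp (outP n a b) Finset.sdiff_subset
  have hdB := hdeg _ hB
  have hOc : (outP n a b).card + (b + 1 - a) = 2 * n := by
    unfold outP
    rw [Finset.card_sdiff_of_subset (Finset.Icc_subset_Icc ha.1 hb.2)]
    simp; omega
  rw [Nat.card_Ioo] at hI
  set L := π.filter (fun C => (C ∩ Finset.Ioo a b).card = 2) with hL
  set R := π.filter (fun C => (C ∩ outP n a b).card = 2) with hR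
  set N := π.filter (fun C => wC {a, b} C = 1) with hN
  rcases L.eq_empty_or_nonempty with h | hLn
  · left
    have : ∑ C ∈ π, (C ∩ Finset.Ioo a b).card = ∑ C ∈ π, wC {a, b} C := by
      apply Finset.sum_congr rfl
      intro C hC
      have h2 : C ∉ L := by rw [h]; simp
      have h3 : ¬ (C ∩ Finset.Ioo a b).card = 2 := fun h3 => h2 (by simp [hL, hC, h3])
      rcases trich hp hab hB hC with h | h | h | h <;> omega
    omega
  rcases R.eq_empty_or_nonempty with h | hRn
  · right
    have : ∑ C ∈ π, (C ∩ outP n a b).card = ∑ C ∈ π, wC {a, b} C := by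
      apply Finset.sum_congr rfl
      intro C hC
      have h2 : C ∉ R := by rw [h]; simp
      have h3 : ¬ (C ∩ outP n a b).card = 2 := fun h3 => h2 (by simp [hR, hC, h3])
      rcases trich hp hab hB hC with h | h | h | h <;> omega
    omega
  exfalso
  have hBL : {a, b} ∉ L := by
    intro h
    have := (Finset.mem_filter.1 h).2
    rcases trich hp hab hB hB with h | h | h | h <;> first | omega | exact h.1 rfl
  have hBR : {a, b} ∉ R := by
    intro h
    have := (Finset.mem_filter.1 h).2
    rcases trich hp hab hB hB with h | h | h | h <;> first | omega | exact h.1 rfl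
  have hLπ : L ⊆ π := Finset.filter_subset _ _
  have hRπ : R ⊆ π := Finset.filter_subset _ _
  have bL := boundary_two hc hdeg hLπ hLn (fun h => hBL (h ▸ hB))
  have bR := boundary_two hc hdeg hRπ hRn (fun h => hBR (h ▸ hB))
  have hLR : ∀ C ∈ L, ∀ D ∈ R, wC C D = 0 := by
    intro C hC D hD
    obtain ⟨hC1, hC2⟩ := Finset.mem_filter.1 hC
    obtain ⟨hD1, hD2⟩ := Finset.mem_filter.1 hD
    obtain ⟨c, d, hcd, rfl⟩ := exists_pair (hp.1 C hC1).1
    obtain ⟨e, f, hef, rfl⟩ := exists_pair (hp.1 D hD1).1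
    rw [card_pair_inter (by omega)] at hC2 hD2
    unfold wC
    rw [crosses_iff hcd hef]
    simp only [outP, Finset.mem_sdiff, Finset.mem_Icc, Finset.mem_Ioo] at hC2 hD2
    have q1 : (a < c ∧ c < b) ∧ (a < d ∧ d < b) := by
      split_ifs at hC2 <;> omega
    have q2 : ¬ (a ≤ e ∧ e ≤ b) ∧ ¬ (a ≤ f ∧ f ≤ b) := by
      split_ifs at hD2 with h1 h2 <;> first | exact ⟨h1.2, h2.2⟩ | omega
    rw [if_neg]
    omega
  have hNL : N ⊆ π \ L := by
    intro C hC
    obtain ⟨hC1, hC2⟩ := Finset.mem_filter.1 hC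
    rw [Finset.mem_sdiff]
    refine ⟨hC1, fun h => ?_⟩
    have := (Finset.mem_filter.1 h).2
    rcases trich hp hab hB hC1 with h | h | h | h <;> omega
  have hNR : N ⊆ π \ R := by
    intro C hC
    obtain ⟨hC1, hC2⟩ := Finset.mem_filter.1 hC
    rw [Finset.mem_sdiff]
    refine ⟨hC1, fun h => ?_⟩
    have := (Finset.mem_filter.1 h).2
    rcases trich hp hab hB hC1 with h | h | h | h <;> omega
  have eL : ∑ C ∈ L, ∑ D ∈ π \ L, wC C D = ∑ C ∈ L, ∑ D ∈ N, wC C D := by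
    apply Finset.sum_congr rfl
    intro C hC
    symm
    apply Finset.sum_subset hNL
    intro D hD hDN
    obtain ⟨hD1, hD2⟩ := Finset.mem_sdiff.1 hD
    have hC' := Finset.mem_filter.1 hC
    rcases trich hp hab hB hD1 with h | h | h | h
    · rw [h.1, wC_symm]
      rcases trich hp hab hB hC'.1 with h | h | h | h <;> omega
    · exact hLR C hC D (by simp [hR, hD1, h.2.2.1])
    · exact absurd (by simp [hN, hD1, h.2.2.2]) hDN
    · exact absurd (by simp [hL, hD1, h.2.1]) hD2
  have eR : ∑ C ∈ R, ∑ D ∈ π \ R, wC C D = ∑ C ∈ R, ∑ D ∈ N, wC C D := by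
    apply Finset.sum_congr rfl
    intro C hC
    symm
    apply Finset.sum_subset hNR
    intro D hD hDN
    obtain ⟨hD1, hD2⟩ := Finset.mem_sdiff.1 hD
    have hC' := Finset.mem_filter.1 hC
    rcases trich hp hab hB hD1 with h | h | h | h
    · rw [h.1, wC_symm]
      rcases trich hp hab hB hC'.1 with h | h | h | h <;> omega
    · exact absurd (by simp [hR, hD1, h.2.2.1]) hD2
    · exact absurd (by simp [hN, hD1, h.2.2.2]) hDN
    · rw [wC_symm]
      exact hLR D (by simp [hL, hD1, h.2.1]) C hC
  have hNc : N.card = 2 := by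
    rw [hN, Finset.card_filter, ← hdB]
    apply Finset.sum_congr rfl
    intro C hC
    rcases trich hp hab hB hC with h | h | h | h <;> simp [h.2.2.2]
  have key : ∑ D ∈ N, 2 ≥ ∑ D ∈ N, (∑ C ∈ L, wC D C + ∑ C ∈ R, wC D C + 1) := by
    apply Finset.sum_le_sum
    intro D hD
    have hD' := Finset.mem_filter.1 hD
    have d1 : Disjoint L R := by
      rw [Finset.disjoint_left]
      intro C h1 h2
      have h1' := Finset.mem_filter.1 h1
      have h2' := Finset.mem_filter.1 h2
      rcases trich hp hab hB h1'.1 with h | h | h | h <;> omega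
    have d2 : {a, b} ∉ L ∪ R := by simp [hBL, hBR]
    rw [← hdeg D hD'.1, ← Finset.sum_union d1, ← hD'.2, wC_symm, add_comm,
      ← Finset.sum_insert d2]
    apply Finset.sum_le_sum_of_subset
    intro X hX
    rcases Finset.mem_insert.1 hX with rfl | h
    · exact hB
    · rcases Finset.mem_union.1 h with h | h
      · exact hLπ h
      · exact hRπ h
  rw [Finset.sum_add_distrib, Finset.sum_add_distrib, Finset.sum_comm,
    Finset.sum_comm (s := N) (t := R)] at key
  simp only [wC_symm _ _] at key
  simp only [Finset.sum_const, hNc, smul_eq_mul] at key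
  rw [eL] at bL
  rw [eR] at bR
  have f1 : ∑ y ∈ L, ∑ x ∈ N, wC x y = ∑ y ∈ L, ∑ x ∈ N, wC y x := by
    simp only [fun x y => wC_symm x y]
  have f2 : ∑ y ∈ R, ∑ x ∈ N, wC x y = ∑ y ∈ R, ∑ x ∈ N, wC y x := by
    simp only [fun x y => wC_symm x y]
  omega

noncomputable def piOf (n : ℕ) (f : ℕ → ℕ) : Finset (Finset ℕ) :=
  (Finset.Icc 1 (2 * n)).image (fun x => {x, f x})

structure GoodF (n : ℕ) (f : ℕ → ℕ) : Prop where
  maps : ∀ x, 1 ≤ x → x ≤ 2 * n → 1 ≤ f x ∧ f x ≤ 2 * n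
  inv : ∀ x, 1 ≤ x → x ≤ 2 * n → f (f x) = x
  par : ∀ x, 1 ≤ x → x ≤ 2 * n → (x + f x) % 2 = 1
  dist : ∀ x, 1 ≤ x → x ≤ 2 * n →
    f x = x + 3 ∨ x = f x + 3 ∨ f x + 3 = x + 2 * n ∨ x + 3 = f x + 2 * n

lemma crosses_iff' {a b c d : ℕ} (h1 : a ≠ b) (h2 : c ≠ d) :
    Crosses {a, b} {c, d} ↔ (min a b < min c d ∧ min c d < max a b ∧ max a b < max c d) ∨
      (min c d < min a b ∧ min a b < max c d ∧ max c d < max a b) := by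
  have e1 : ({a, b} : Finset ℕ) = {min a b, max a b} := by
    rcases le_total a b with h | h
    · rw [min_eq_left h, max_eq_right h]
    · rw [min_eq_right h, max_eq_left h, Finset.pair_comm]
  have e2 : ({c, d} : Finset ℕ) = {min c d, max c d} := by
    rcases le_total c d with h | h
    · rw [min_eq_left h, max_eq_right h]
    · rw [min_eq_right h, max_eq_left h, Finset.pair_comm]
  rw [e1, e2, crosses_iff (by omega) (by omega)]

lemma piOf_pairing {n : ℕ} {f : ℕ → ℕ} (hf : GoodF n f) : IsPairing n (piOf n f) := by
  constructor
  · intro B hB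
    obtain ⟨x, hx, rfl⟩ := Finset.mem_image.1 hB
    rw [Finset.mem_Icc] at hx
    have h1 := hf.maps x hx.1 hx.2
    have h2 := hf.par x hx.1 hx.2
    refine ⟨Finset.card_pair (by omega), ?_⟩
    intro y hy
    simp only [Finset.mem_insert, Finset.mem_singleton] at hy
    rw [Finset.mem_Icc]
    omega
  · intro x hx
    refine ⟨{x, f x}, ⟨Finset.mem_image_of_mem _ hx, by simp⟩, ?_⟩
    rintro B ⟨hB, hxB⟩
    obtain ⟨y, hy, rfl⟩ := Finset.mem_image.1 hB
    rw [Finset.mem_Icc] at hy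
    simp only [Finset.mem_insert, Finset.mem_singleton] at hxB
    rcases hxB with rfl | rfl
    · rfl
    · rw [hf.inv y hy.1 hy.2, Finset.pair_comm]

lemma piOf_blk {n : ℕ} (hn : 3 ≤ n) {f : ℕ → ℕ} (hf : GoodF n f) {B : Finset ℕ} (hB : B ∈ piOf n f) :
    ∃ a b, 1 ≤ a ∧ b ≤ 2 * n ∧ a < b ∧ B = {a, b} ∧ (b = a + 3 ∨ b + 3 = a + 2 * n) ∧
      (a + b) % 2 = 1 := by
  obtain ⟨x, hx, rfl⟩ := Finset.mem_image.1 hB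
  rw [Finset.mem_Icc] at hx
  have h1 := hf.maps x hx.1 hx.2
  have h2 := hf.par x hx.1 hx.2
  have h3 := hf.dist x hx.1 hx.2
  rcases lt_or_ge x (f x) with h | h
  · exact ⟨x, f x, by omega, by omega, h, rfl, by omega, by omega⟩
  · exact ⟨f x, x, by omega, by omega, by omega, Finset.pair_comm _ _, by omega, by omega⟩

lemma piOf_parity {n : ℕ} (hn : 3 ≤ n) {f : ℕ → ℕ} (hf : GoodF n f) : ParityReversing (piOf n f) := by
  intro B hB
  obtain ⟨a, b, _, _, _, rfl, _, h⟩ := piOf_blk hn hf hB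
  rcases Nat.even_or_odd a with h1 | h1
  · refine ⟨b, a, Finset.pair_comm _ _, ?_, h1⟩
    rw [Nat.even_iff] at h1
    rw [Nat.odd_iff]; omega
  · refine ⟨a, b, rfl, h1, ?_⟩
    rw [Nat.odd_iff] at h1
    rw [Nat.even_iff]; omega

lemma piOf_cr {n : ℕ} (hn : 3 ≤ n) {f : ℕ → ℕ} (hf : GoodF n f) : crNum (piOf n f) = n := by
  have hp := piOf_pairing hf
  have hdeg : ∀ B ∈ piOf n f, ∑ C ∈ piOf n f, wC B C = 2 := by
    intro B hB
    obtain ⟨a, b, ha, hb, hab, rfl, h, _⟩ := piOf_blk hn hf hB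
    rcases h with h | h
    · have hI := sum_inter hp (Finset.Ioo a b) (by
        intro x; simp only [Finset.mem_Ioo, Finset.mem_Icc]; omega)
      rw [Nat.card_Ioo] at hI
      have : ∑ C ∈ piOf n f, (C ∩ Finset.Ioo a b).card = ∑ C ∈ piOf n f, wC {a, b} C := by
        apply Finset.sum_congr rfl
        intro C hC
        have h3 : ¬ (C ∩ Finset.Ioo a b).card = 2 := by
          obtain ⟨c, d, hc, hd, hcd, rfl, h', _⟩ := piOf_blk hn hf hC
          rw [card_pair_inter hcd.ne]
          simp only [Finset.mem_Ioo]
          split_ifs <;> omega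
        rcases trich hp hab hB hC with h | h | h | h <;> omega
      omega
    · have hO := sum_inter hp (outP n a b) Finset.sdiff_subset
      have hOc : (outP n a b).card + (b + 1 - a) = 2 * n := by
        unfold outP
        rw [Finset.card_sdiff_of_subset (Finset.Icc_subset_Icc ha hb)]
        simp; omega
      have : ∑ C ∈ piOf n f, (C ∩ outP n a b).card = ∑ C ∈ piOf n f, wC {a, b} C := by
        apply Finset.sum_congr rfl
        intro C hC
        have h3 : ¬ (C ∩ outP n a b).card = 2 := by
          obtain ⟨c, d, hc, hd, hcd, rfl, h', _⟩ := piOf_blk hn hf hC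
          rw [card_pair_inter hcd.ne]
          simp only [outP, Finset.mem_sdiff, Finset.mem_Icc]
          split_ifs <;> omega
        rcases trich hp hab hB hC with h | h | h | h <;> omega
      omega
  have h1 := sum_wC (piOf n f)
  rw [Finset.sum_congr rfl hdeg, ← crNum_eq, Finset.sum_const, card_pairing hp, smul_eq_mul] at h1
  omega

lemma piOf_odd {n : ℕ} {f : ℕ → ℕ} (hf : GoodF n f) {B : Finset ℕ} (hB : B ∈ piOf n f) :
    ∃ i, i < n ∧ B = {2 * i + 1, f (2 * i + 1)} := by
  obtain ⟨x, hx, rfl⟩ := Finset.mem_image.1 hB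
  rw [Finset.mem_Icc] at hx
  have h1 := hf.maps x hx.1 hx.2
  have h2 := hf.par x hx.1 hx.2
  have h3 := hf.inv x hx.1 hx.2
  rcases Nat.mod_two_eq_zero_or_one x with h | h
  · refine ⟨f x / 2, by omega, ?_⟩
    have e : 2 * (f x / 2) + 1 = f x := by omega
    rw [e, h3, Finset.pair_comm]
  · refine ⟨x / 2, by omega, ?_⟩
    have e : 2 * (x / 2) + 1 = x := by omega
    rw [e]

lemma piOf_conn {n : ℕ} {f : ℕ → ℕ} (hf : GoodF n f)
    (hx : ∀ i, i + 1 < n → Crosses {2 * i + 1, f (2 * i + 1)}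
      {2 * (i + 1) + 1, f (2 * (i + 1) + 1)}) : ConnectedPairing (piOf n f) := by
  rintro ⟨S, T, hST, hd, ⟨B, hB⟩, ⟨C, hC⟩, hno⟩
  have hm : ∀ i, i < n → ({2 * i + 1, f (2 * i + 1)} : Finset ℕ) ∈ S ∪ T := by
    intro i hi
    rw [hST]
    exact Finset.mem_image_of_mem (fun x => ({x, f x} : Finset ℕ)) (Finset.mem_Icc.2 (by omega))
  have hchain : ∀ i, i < n → ((({2 * i + 1, f (2 * i + 1)} : Finset ℕ) ∈ S) ↔
      ({2 * 0 + 1, f (2 * 0 + 1)} : Finset ℕ) ∈ S) := by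
    intro i
    induction i with
    | zero => intro _; rfl
    | succ k ih =>
      intro hk
      rw [← ih (by omega)]
      have hk1 := hx k hk
      have m1 := Finset.mem_union.1 (hm k (by omega))
      have m2 := Finset.mem_union.1 (hm (k + 1) hk)
      constructor
      · intro h
        exact m1.resolve_right (fun h' => hno _ h _ h' (crosses_symm.1 hk1))
      · intro h
        exact m2.resolve_right (fun h' => hno _ h _ h' hk1)
  obtain ⟨i, hi, rfl⟩ := piOf_odd hf (hST ▸ Finset.mem_union_left T hB)
  obtain ⟨j, hj, rfl⟩ := piOf_odd hf (hST ▸ Finset.mem_union_right S hC)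
  exact Finset.disjoint_left.1 hd ((hchain j hj).2 ((hchain i hi).1 hB)) hC

def f1 (n x : ℕ) : ℕ :=
  if x % 2 = 1 then (if x + 3 ≤ 2 * n then x + 3 else x + 3 - 2 * n)
  else (if 3 < x then x - 3 else x + 2 * n - 3)

def f2 (n x : ℕ) : ℕ :=
  if x % 2 = 0 then (if x + 3 ≤ 2 * n then x + 3 else x + 3 - 2 * n)
  else (if 3 < x then x - 3 else x + 2 * n - 3)

lemma f1_good {n : ℕ} (hn : 3 ≤ n) : GoodF n (f1 n) := by
  constructor <;> intro x h1 h2 <;> unfold f1 <;> split_ifs <;> omega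

lemma f2_good {n : ℕ} (hn : 3 ≤ n) : GoodF n (f2 n) := by
  constructor <;> intro x h1 h2 <;> unfold f2 <;> split_ifs <;> omega

lemma f1_conn {n : ℕ} (hn : 3 ≤ n) : ConnectedPairing (piOf n (f1 n)) := by
  apply piOf_conn (f1_good hn)
  intro i hi
  have e1 : f1 n (2 * i + 1) = 2 * i + 4 := by unfold f1; split_ifs <;> omega
  rcases Nat.lt_or_ge (i + 2) n with h | h
  · have e2 : f1 n (2 * (i + 1) + 1) = 2 * i + 6 := by unfold f1; split_ifs <;> omega
    rw [e1, e2, crosses_iff' (by omega) (by omega)]; omega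
  · have e2 : f1 n (2 * (i + 1) + 1) = 2 := by unfold f1; split_ifs <;> omega
    rw [e1, e2, crosses_iff' (by omega) (by omega)]; omega

lemma f2_conn {n : ℕ} (hn : 3 ≤ n) : ConnectedPairing (piOf n (f2 n)) := by
  apply piOf_conn (f2_good hn)
  intro i hi
  have e1 : f2 n (2 * i + 1) = if i ≤ 1 then 2 * i + 1 + 2 * n - 3 else 2 * i + 1 - 3 := by
    unfold f2; split_ifs <;> omega
  have e2 : f2 n (2 * (i + 1) + 1) =
      if i + 1 ≤ 1 then 2 * (i + 1) + 1 + 2 * n - 3 else 2 * (i + 1) + 1 - 3 := by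
    unfold f2; split_ifs <;> omega
  rw [e1, e2]
  split_ifs <;> first | omega | (rw [crosses_iff' (by omega) (by omega)]; omega)

lemma exists_sigma {n : ℕ} {π : Finset (Finset ℕ)} (hp : IsPairing n π) (hr : ParityReversing π)
    (hc : ConnectedPairing π) (hdeg : ∀ B ∈ π, ∑ C ∈ π, wC B C = 2) :
    ∃ f, GoodF n f ∧ ∀ x, 1 ≤ x → x ≤ 2 * n → {x, f x} ∈ π := by
  have h : ∀ x, ∃ y, 1 ≤ x → x ≤ 2 * n → y ≠ x ∧ {x, y} ∈ π := by
    intro x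
    by_cases hx : x ∈ Finset.Icc 1 (2 * n)
    · obtain ⟨B, ⟨hB, hxB⟩, _⟩ := hp.2 x hx
      obtain ⟨a, b, hab, rfl⟩ := exists_pair (hp.1 B hB).1
      simp only [Finset.mem_insert, Finset.mem_singleton] at hxB
      rcases hxB with rfl | rfl
      · exact ⟨b, fun _ _ => ⟨by omega, hB⟩⟩
      · exact ⟨a, fun _ _ => ⟨by omega, by rwa [Finset.pair_comm]⟩⟩
    · rw [Finset.mem_Icc] at hx
      exact ⟨0, fun h1 h2 => absurd ⟨h1, h2⟩ hx⟩
  choose f hf using h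
  have maps : ∀ x, 1 ≤ x → x ≤ 2 * n → 1 ≤ f x ∧ f x ≤ 2 * n := by
    intro x h1 h2
    exact Finset.mem_Icc.1 ((hp.1 _ (hf x h1 h2).2).2 (by simp))
  refine ⟨f, ⟨maps, ?_, ?_, ?_⟩, fun x h1 h2 => (hf x h1 h2).2⟩
  · intro x h1 h2
    obtain ⟨m1, m2⟩ := maps x h1 h2
    have a1 := hf x h1 h2
    have a2 := hf (f x) m1 m2
    have e := blk_eq hp a1.2 a2.2 (x := f x) (by simp) (by simp)
    have : f (f x) ∈ ({x, f x} : Finset ℕ) := by rw [e]; simp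
    simp only [Finset.mem_insert, Finset.mem_singleton] at this
    exact this.resolve_right a2.1
  · intro x h1 h2
    obtain ⟨a, b, e, ⟨a', ha⟩, ⟨b', hb⟩⟩ := hr _ (hf x h1 h2).2
    have m1 : x ∈ ({a, b} : Finset ℕ) := by rw [← e]; simp
    have m2 : f x ∈ ({a, b} : Finset ℕ) := by rw [← e]; simp
    have := (hf x h1 h2).1
    simp only [Finset.mem_insert, Finset.mem_singleton] at m1 m2
    omega
  · intro x h1 h2
    obtain ⟨a1, a2⟩ := hf x h1 h2
    rcases lt_or_gt_of_ne a1 with h | h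
    · rw [Finset.pair_comm] at a2
      have := sided hp hc hdeg h a2
      omega
    · have := sided hp hc hdeg h a2
      omega

lemma eq_piOf {n : ℕ} {π : Finset (Finset ℕ)} (hp : IsPairing n π) {f g : ℕ → ℕ}
    (hg : GoodF n g) (hf : ∀ x, 1 ≤ x → x ≤ 2 * n → {x, f x} ∈ π)
    (h : ∀ x, 1 ≤ x → x ≤ 2 * n → x % 2 = 1 → f x = g x) : π = piOf n g := by
  symm
  apply Finset.eq_of_subset_of_card_le
  · intro B hB
    obtain ⟨i, hi, rfl⟩ := piOf_odd hg hB
    rw [← h _ (by omega) (by omega) (by omega)]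
    exact hf _ (by omega) (by omega)
  · rw [card_pairing hp, card_pairing (piOf_pairing hg)]

def UpR (n p q : ℕ) : Prop := q = p + 3 ∨ q + 2 * n = p + 3

lemma up_step {n : ℕ} (hn : 4 ≤ n) {π : Finset (Finset ℕ)} (hp : IsPairing n π)
    (hc : ConnectedPairing π) (hdeg : ∀ B ∈ π, ∑ C ∈ π, wC B C = 2) {f : ℕ → ℕ}
    (hg : GoodF n f) (hf : ∀ x, 1 ≤ x → x ≤ 2 * n → {x, f x} ∈ π)
    (p m r : ℕ) (h1 : 1 ≤ p) (h2 : p ≤ 2 * n) (m1 : 1 ≤ m) (m2 : m ≤ 2 * n)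
    (r1 : 1 ≤ r) (r2 : r ≤ 2 * n) (hm : m = p + 1 ∨ m + 2 * n = p + 1)
    (hr : r = p + 2 ∨ r + 2 * n = p + 2) (hu : UpR n p (f p)) : UpR n r (f r) := by
  by_contra hcon
  have p1 := hg.maps p h1 h2
  have p2 := hg.maps m m1 m2
  have p3 := hg.maps r r1 r2
  have d2 := hg.dist m m1 m2
  have d3 := hg.dist r r1 r2
  have b1 := hf p h1 h2
  have b2 := hf m m1 m2
  have b3 := hf r r1 r2
  unfold UpR at hu hcon
  generalize f p = x at *
  generalize f m = y at *
  generalize f r = z at *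
  refine no_tri hn hp hc hdeg b1 b2 b3 ?_ ?_ ?_
  · rw [crosses_iff' (by omega) (by omega)]; omega
  · rw [crosses_iff' (by omega) (by omega)]; omega
  · rw [crosses_iff' (by omega) (by omega)]; omega

lemma up_iter {n : ℕ} (hn : 4 ≤ n) {π : Finset (Finset ℕ)} (hp : IsPairing n π)
    (hc : ConnectedPairing π) (hdeg : ∀ B ∈ π, ∑ C ∈ π, wC B C = 2) {f : ℕ → ℕ}
    (hg : GoodF n f) (hf : ∀ x, 1 ≤ x → x ≤ 2 * n → {x, f x} ∈ π)
    (p k : ℕ) (h1 : 1 ≤ p) (h2 : p + 2 * k ≤ 2 * n) (hu : UpR n p (f p)) :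
    UpR n (p + 2 * k) (f (p + 2 * k)) := by
  induction k with
  | zero => simpa using hu
  | succ k ih =>
    exact up_step hn hp hc hdeg hg hf (p + 2 * k) (p + 2 * k + 1) (p + 2 * (k + 1)) (by omega)
      (by omega) (by omega) (by omega) (by omega) (by omega) (by omega) (by omega) (ih (by omega))

lemma classify {n : ℕ} (hn : 4 ≤ n) {π : Finset (Finset ℕ)} (hp : IsPairing n π)
    (hr : ParityReversing π) (hc : ConnectedPairing π) (hk : crNum π = n) :
    π = piOf n (f1 n) ∨ π = piOf n (f2 n) := by
  have hdeg := deg_two (by omega) hp hr hc hk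
  obtain ⟨f, hg, hf⟩ := exists_sigma hp hr hc hdeg
  by_cases hu : UpR n 1 (f 1)
  · left
    apply eq_piOf hp (f1_good (by omega)) hf
    intro x h1 h2 h3
    have := up_iter hn hp hc hdeg hg hf 1 (x / 2) le_rfl (by omega) hu
    have e : 1 + 2 * (x / 2) = x := by omega
    rw [e] at this
    have := hg.maps x h1 h2
    unfold UpR at *
    unfold f1
    split_ifs <;> omega
  · right
    apply eq_piOf hp (f2_good (by omega)) hf
    intro x h1 h2 h3
    have hx : ¬ UpR n x (f x) := by
      intro hx
      apply hu
      have := up_iter hn hp hc hdeg hg hf x ((2 * n - 1 - x) / 2) h1 (by omega) hx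
      have e : x + 2 * ((2 * n - 1 - x) / 2) = 2 * n - 1 := by omega
      rw [e] at this
      exact up_step hn hp hc hdeg hg hf (2 * n - 1) (2 * n) 1 (by omega) (by omega) (by omega)
        (by omega) (by omega) (by omega) (by omega) (by omega) this
    have := hg.maps x h1 h2
    have := hg.dist x h1 h2
    unfold UpR at *
    unfold f2
    split_ifs <;> omega

/-- `b_{3,3} = 1`, and `b_{n,n} = 2` for every `n ≥ 4`. -/
theorem bCount_minimal_values :
    bCount 3 3 = 1 ∧ ∀ n : ℕ, 4 ≤ n → bCount n n = 2 := by
  constructor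
  · unfold bCount
    rw [Set.ncard_eq_one]
    refine ⟨piOf 3 (f1 3), ?_⟩
    ext π
    simp only [Set.mem_ofPred_eq, Set.mem_singleton_iff]
    constructor
    · rintro ⟨hp, hr, hc, hk⟩
      have hdeg := deg_two (by omega) hp hr hc hk
      obtain ⟨f, hg, hf⟩ := exists_sigma hp hr hc hdeg
      apply eq_piOf hp (f1_good le_rfl) hf
      intro x h1 h2 h3
      have := hg.maps x h1 h2
      have := hg.dist x h1 h2
      unfold f1
      split_ifs <;> omega
    · rintro rfl
      have hg := f1_good (le_refl 3)
      exact ⟨piOf_pairing hg, piOf_parity le_rfl hg, f1_conn le_rfl, piOf_cr le_rfl hg⟩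
  · intro n hn
    have h3 : 3 ≤ n := by omega
    have g1 := f1_good h3
    have g2 := f2_good h3
    unfold bCount
    rw [Set.ncard_eq_two]
    refine ⟨piOf n (f1 n), piOf n (f2 n), ?_, ?_⟩
    · intro h
      have a1 : {1, f1 n 1} ∈ piOf n (f1 n) :=
        Finset.mem_image_of_mem (fun x => ({x, f1 n x} : Finset ℕ)) (Finset.mem_Icc.2 (by omega))
      have a2 : {1, f2 n 1} ∈ piOf n (f2 n) :=
        Finset.mem_image_of_mem (fun x => ({x, f2 n x} : Finset ℕ)) (Finset.mem_Icc.2 (by omega))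
      rw [h] at a1
      have e := blk_eq (piOf_pairing g2) a1 a2 (x := 1) (by simp) (by simp)
      have e1 : f1 n 1 = 4 := by unfold f1; split_ifs <;> omega
      have e2 : f2 n 1 = 2 * n - 2 := by unfold f2; simp; omega
      rw [e1, e2] at e
      have hm : 4 ∈ ({1, 2 * n - 2} : Finset ℕ) := by rw [← e]; simp
      simp only [Finset.mem_insert, Finset.mem_singleton] at hm
      omega
    · ext π
      simp only [Set.mem_ofPred_eq, Set.mem_insert_iff, Set.mem_singleton_iff]
      constructor
      · rintro ⟨hp, hr, hc, hk⟩
        exact classify hn hp hr hc hk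
      · rintro (rfl | rfl)
        · exact ⟨piOf_pairing g1, piOf_parity h3 g1, f1_conn h3, piOf_cr h3 g1⟩
        · exact ⟨piOf_pairing g2, piOf_parity h3 g2, f2_conn h3, piOf_cr h3 g2⟩
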